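/- Let (⊗̄, O, λ, ρ) be a unital product on an H-graded category E. Then the map sending η ∈ E^n(O,O) to the family (η_A)_{A∈E}, where η_A ∈ E^n(A,A) is the composite A →(λ_A)⁻¹ O ⊗̄ A →(η ⊗̄ id_A) O ⊗̄ A →λ_A A, is a well-defined homomorphism of graded H-algebras E(O,O) → C_E which is right-inverse to the evaluation map ev_O : C_E → E(O,O) sending ξ to ξ_O. Consequently E(O,O) is a graded-algebra retract of C_E, and in particular E(O,O) is a graded-commutative graded H-algebra. -/

import Mathlib

/-! Functoriality of `⊗̄` gives `(id ⊗̄ α) ∘ (η ⊗̄ id) = (-1)^{mn} η ⊗̄ α = (-1)^{mn} (η ⊗̄ id) ∘ (id ⊗̄ α)`.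
Conjugating by the natural degree-0 isomorphism `λ` turns this into
`α ∘ η_A = (-1)^{mn} η_B ∘ α`, so `(η_A)` is central (`fam_central`). Since `λ_O = ρ_O`, naturality
of `ρ` gives `η_O = η` (`fam_unit`), and centrality at `O` then says that `E(O,O)` is
graded-commutative.

Two points need the internal direct sum decompositions. First, `λ⁻¹` has degree 0 because `λ` has
(`lamInv_mem`). Second, multiplicativity and `H`-linearity hold for arbitrary elements, while the
interchange law and the symmetry `hα = ± αh` are given only for homogeneous ones. -/

/-! Basic notions: graded-commutative rings, H-graded categories. -/

noncomputable section

open CategoryTheory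

/-- The sign `(-1)^(m*n)`. -/
def gsign (m n : ℤ) : ℤ := (((-1 : ℤˣ) ^ (m * n) : ℤˣ) : ℤ)

/-- A graded-commutative ring structure on `H`, with degree-`i` component `hdeg i`:
`h h' = (-1)^{mn} h' h` for `h ∈ H^n`, `h' ∈ H^m`. -/
structure IsGradedCommRing (H : Type*) [Ring H] (hdeg : ℤ → AddSubgroup H) : Prop where
  one_mem : (1 : H) ∈ hdeg 0
  mul_mem : ∀ {m n : ℤ} {x y : H}, x ∈ hdeg m → y ∈ hdeg n → x * y ∈ hdeg (m + n)
  comm : ∀ {m n : ℤ} {x y : H}, x ∈ hdeg n → y ∈ hdeg m → x * y = gsign m n • (y * x)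
  isInternal : DirectSum.IsInternal hdeg

structure PreGCat (H : Type*) [Ring H] (hdeg : ℤ → AddSubgroup H) where
  Obj : Type*
  Hom : Obj → Obj → Type*
  ab : ∀ A B : Obj, AddCommGroup (Hom A B)

attribute [instance] PreGCat.ab

/-- An `H`-graded category: each hom-set is a symmetric graded `H`-module
`E(A,B) = ⊕ᵢ E^i(A,B)` and composition is graded `H`-bilinear. -/
structure GCat (H : Type*) [Ring H] (hdeg : ℤ → AddSubgroup H) extends
    PreGCat H hdeg where
  deg : ∀ A B : Obj, ℤ → AddSubgroup (Hom A B)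
  comp : ∀ {A B C : Obj}, Hom B C → Hom A B → Hom A C
  id : ∀ A : Obj, Hom A A
  hsmul : ∀ {A B : Obj}, H → Hom A B → Hom A B
  hrsmul : ∀ {A B : Obj}, Hom A B → H → Hom A B
  comp_assoc : ∀ {A B C D : Obj} (γ : Hom C D) (β : Hom B C) (α : Hom A B),
    comp (comp γ β) α = comp γ (comp β α)
  id_comp : ∀ {A B : Obj} (α : Hom A B), comp (id B) α = α
  comp_id : ∀ {A B : Obj} (α : Hom A B), comp α (id A) = α
  comp_add : ∀ {A B C : Obj} (β β' : Hom B C) (α : Hom A B),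
    comp (β + β') α = comp β α + comp β' α
  add_comp : ∀ {A B C : Obj} (β : Hom B C) (α α' : Hom A B),
    comp β (α + α') = comp β α + comp β α'
  id_mem : ∀ A : Obj, id A ∈ deg A A 0
  comp_mem : ∀ {A B C : Obj} {m n : ℤ} {β : Hom B C} {α : Hom A B},
    β ∈ deg B C m → α ∈ deg A B n → comp β α ∈ deg A C (m + n)
  hsmul_add : ∀ {A B : Obj} (h : H) (α α' : Hom A B),
    hsmul h (α + α') = hsmul h α + hsmul h α'
  add_hsmul : ∀ {A B : Obj} (h h' : H) (α : Hom A B),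
    hsmul (h + h') α = hsmul h α + hsmul h' α
  one_hsmul : ∀ {A B : Obj} (α : Hom A B), hsmul 1 α = α
  mul_hsmul : ∀ {A B : Obj} (h h' : H) (α : Hom A B),
    hsmul (h * h') α = hsmul h (hsmul h' α)
  hrsmul_add : ∀ {A B : Obj} (α α' : Hom A B) (h : H),
    hrsmul (α + α') h = hrsmul α h + hrsmul α' h
  hrsmul_add' : ∀ {A B : Obj} (α : Hom A B) (h h' : H),
    hrsmul α (h + h') = hrsmul α h + hrsmul α h'
  hrsmul_one : ∀ {A B : Obj} (α : Hom A B), hrsmul α 1 = α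
  hrsmul_mul : ∀ {A B : Obj} (α : Hom A B) (h h' : H),
    hrsmul α (h * h') = hrsmul (hrsmul α h) h'
  hsmul_hrsmul : ∀ {A B : Obj} (h : H) (α : Hom A B) (h' : H),
    hrsmul (hsmul h α) h' = hsmul h (hrsmul α h')
  hsmul_mem : ∀ {A B : Obj} {m n : ℤ} {h : H} {α : Hom A B},
    h ∈ hdeg n → α ∈ deg A B m → hsmul h α ∈ deg A B (n + m)
  hrsmul_mem : ∀ {A B : Obj} {m n : ℤ} {h : H} {α : Hom A B},
    h ∈ hdeg n → α ∈ deg A B m → hrsmul α h ∈ deg A B (m + n)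
  symm_smul : ∀ {A B : Obj} {m n : ℤ} {h : H} {α : Hom A B},
    h ∈ hdeg n → α ∈ deg A B m → hsmul h α = gsign m n • hrsmul α h
  comp_hsmul : ∀ {A B C : Obj} (h : H) (β : Hom B C) (α : Hom A B),
    comp (hsmul h β) α = hsmul h (comp β α)
  hrsmul_comp : ∀ {A B C : Obj} (β : Hom B C) (α : Hom A B) (h : H),
    comp β (hrsmul α h) = hrsmul (comp β α) h
  isInternal : ∀ A B : Obj, DirectSum.IsInternal (deg A B)

/-- A degree-`n` element of the graded center of an `H`-graded category `E`:
a family `ξ_A ∈ E^n(A,A)` with `α ∘ ξ_A = (-1)^{mn} ξ_B ∘ α` for `α ∈ E^m(A,B)`. -/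
structure CenterElem {H : Type*} [Ring H] {hdeg : ℤ → AddSubgroup H}
    (E : GCat H hdeg) (n : ℤ) where
  app : ∀ A : E.Obj, E.Hom A A
  app_mem : ∀ A : E.Obj, app A ∈ E.deg A A n
  natural : ∀ {A B : E.Obj} (m : ℤ) (α : E.Hom A B), α ∈ E.deg A B m →
    E.comp α (app A) = gsign m n • E.comp (app B) α

/-- A unital product `(⊗̄, O, λ, ρ)` on an `H`-graded category `E`:
an `H`-graded functor `⊗̄ : E ⊗_H E → E` (given componentwise), an object `O`,
and degree-0 functorial isomorphisms `λ : (O ⊗̄ -) ≅ id` and `ρ : (- ⊗̄ O) ≅ id`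
with `λ_O = ρ_O`. -/
structure UnitalProduct {H : Type*} [Ring H] {hdeg : ℤ → AddSubgroup H}
    (E : GCat H hdeg) where
  tobj : E.Obj → E.Obj → E.Obj
  tmap : ∀ {A₁ B₁ A₂ B₂ : E.Obj},
    E.Hom A₁ B₁ → E.Hom A₂ B₂ → E.Hom (tobj A₁ A₂) (tobj B₁ B₂)
  tmap_add_left : ∀ {A₁ B₁ A₂ B₂ : E.Obj} (α α' : E.Hom A₁ B₁) (β : E.Hom A₂ B₂),
    tmap (α + α') β = tmap α β + tmap α' β
  tmap_add_right : ∀ {A₁ B₁ A₂ B₂ : E.Obj} (α : E.Hom A₁ B₁) (β β' : E.Hom A₂ B₂),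
    tmap α (β + β') = tmap α β + tmap α β'
  tmap_mem : ∀ {A₁ B₁ A₂ B₂ : E.Obj} {m₁ m₂ : ℤ}
    {α₁ : E.Hom A₁ B₁} {α₂ : E.Hom A₂ B₂},
    α₁ ∈ E.deg A₁ B₁ m₁ → α₂ ∈ E.deg A₂ B₂ m₂ →
    tmap α₁ α₂ ∈ E.deg (tobj A₁ A₂) (tobj B₁ B₂) (m₁ + m₂)
  tmap_id : ∀ A₁ A₂ : E.Obj, tmap (E.id A₁) (E.id A₂) = E.id (tobj A₁ A₂)
  tmap_comp : ∀ {A₁ B₁ C₁ A₂ B₂ C₂ : E.Obj} {m₁ n₂ : ℤ}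
    (β₁ : E.Hom B₁ C₁) (β₂ : E.Hom B₂ C₂) (α₁ : E.Hom A₁ B₁) (α₂ : E.Hom A₂ B₂),
    β₂ ∈ E.deg B₂ C₂ n₂ → α₁ ∈ E.deg A₁ B₁ m₁ →
    E.comp (tmap β₁ β₂) (tmap α₁ α₂)
      = gsign n₂ m₁ • tmap (E.comp β₁ α₁) (E.comp β₂ α₂)
  tmap_hsmul : ∀ {A₁ B₁ A₂ B₂ : E.Obj} (h : H) (α : E.Hom A₁ B₁) (β : E.Hom A₂ B₂),
    tmap (E.hsmul h α) β = E.hsmul h (tmap α β)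
  tmap_hrsmul : ∀ {A₁ B₁ A₂ B₂ : E.Obj} (α : E.Hom A₁ B₁) (β : E.Hom A₂ B₂) (h : H),
    tmap α (E.hrsmul β h) = E.hrsmul (tmap α β) h
  tmap_mid : ∀ {A₁ B₁ A₂ B₂ : E.Obj} (α : E.Hom A₁ B₁) (h : H) (β : E.Hom A₂ B₂),
    tmap (E.hrsmul α h) β = tmap α (E.hsmul h β)
  unit : E.Obj
  lam : ∀ A : E.Obj, E.Hom (tobj unit A) A
  lamInv : ∀ A : E.Obj, E.Hom A (tobj unit A)
  lam_lamInv : ∀ A : E.Obj, E.comp (lam A) (lamInv A) = E.id A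
  lamInv_lam : ∀ A : E.Obj, E.comp (lamInv A) (lam A) = E.id (tobj unit A)
  lam_mem : ∀ A : E.Obj, lam A ∈ E.deg (tobj unit A) A 0
  lam_natural : ∀ {A B : E.Obj} (α : E.Hom A B),
    E.comp α (lam A) = E.comp (lam B) (tmap (E.id unit) α)
  rho : ∀ A : E.Obj, E.Hom (tobj A unit) A
  rhoInv : ∀ A : E.Obj, E.Hom A (tobj A unit)
  rho_rhoInv : ∀ A : E.Obj, E.comp (rho A) (rhoInv A) = E.id A
  rhoInv_rho : ∀ A : E.Obj, E.comp (rhoInv A) (rho A) = E.id (tobj A unit)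
  rho_mem : ∀ A : E.Obj, rho A ∈ E.deg (tobj A unit) A 0
  rho_natural : ∀ {A B : E.Obj} (α : E.Hom A B),
    E.comp α (rho A) = E.comp (rho B) (tmap α (E.id unit))
  lam_rho : lam unit = rho unit

/-- The map sending `η ∈ E^n(O,O)` to the family `(η_A)`,
`η_A = λ_A ∘ (η ⊗̄ id_A) ∘ λ_A⁻¹`. -/
def UnitalProduct.fam {H : Type*} [Ring H] {hdeg : ℤ → AddSubgroup H}
    {E : GCat H hdeg} (P : UnitalProduct E) (η : E.Hom P.unit P.unit) (A : E.Obj) :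
    E.Hom A A :=
  E.comp (P.lam A) (E.comp (P.tmap η (E.id A)) (P.lamInv A))

section GradedHelpers

lemma gsign_zero_left (n : ℤ) : gsign 0 n = 1 := by simp [gsign]

lemma gsign_comm (m n : ℤ) : gsign m n = gsign n m := by simp [gsign, mul_comm]

/-- Additive properties of an internally graded group may be checked on homogeneous elements. -/
lemma internal_induction {M : Type*} [AddCommGroup M] {d : ℤ → AddSubgroup M}
    (hd : DirectSum.IsInternal d) {p : M → Prop} (h0 : p 0)
    (hadd : ∀ x y, p x → p y → p (x + y)) (hom : ∀ i, ∀ x ∈ d i, p x) (x : M) : p x := by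
  obtain ⟨y, rfl⟩ := hd.2 x
  induction y using DirectSum.induction_on with
  | zero => simpa using h0
  | of i x => simpa using hom i x x.2
  | add x y hx hy => simpa using hadd _ _ hx hy

variable {H : Type*} [Ring H] {hdeg : ℤ → AddSubgroup H}

section GCatLemmas

variable (E : GCat H hdeg) {A B C : E.Obj}

lemma GCat.comp_zero (β : E.Hom B C) : E.comp β (0 : E.Hom A B) = 0 := by
  simpa using E.add_comp β (0 : E.Hom A B) 0

lemma GCat.zero_comp (α : E.Hom A B) : E.comp (0 : E.Hom B C) α = 0 := by
  simpa using E.comp_add (0 : E.Hom B C) 0 α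

lemma GCat.zero_hsmul (α : E.Hom A B) : E.hsmul 0 α = 0 := by
  simpa using E.add_hsmul 0 0 α

lemma GCat.hsmul_zero (h : H) : E.hsmul h (0 : E.Hom A B) = 0 := by
  simpa using E.hsmul_add h (0 : E.Hom A B) 0

lemma GCat.comp_zsmul (k : ℤ) (β : E.Hom B C) (α : E.Hom A B) :
    E.comp β (k • α) = k • E.comp β α :=
  map_zsmul (AddMonoidHom.mk' (fun a : E.Hom A B => E.comp β a) (E.add_comp β)) k α

lemma GCat.zsmul_comp (k : ℤ) (β : E.Hom B C) (α : E.Hom A B) :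
    E.comp (k • β) α = k • E.comp β α :=
  map_zsmul (AddMonoidHom.mk' (fun b : E.Hom B C => E.comp b α)
    (fun x y => E.comp_add x y α)) k β

/-- Composition with a degree-0 morphism on the left commutes with the left `H`-action: on
homogeneous elements the two symmetry signs cancel. -/
lemma GCat.comp_hsmul_of_deg_zero (hH : IsGradedCommRing H hdeg) {β : E.Hom B C}
    (hβ : β ∈ E.deg B C 0) (h : H) (α : E.Hom A B) :
    E.comp β (E.hsmul h α) = E.hsmul h (E.comp β α) := by
  induction h using internal_induction hH.isInternal with
  | h0 => simp only [E.zero_hsmul, E.comp_zero]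
  | hadd x y hx hy => simp only [E.add_hsmul, E.add_comp, hx, hy]
  | hom n h hh =>
    induction α using internal_induction (E.isInternal A B) with
    | h0 => simp only [E.hsmul_zero, E.comp_zero]
    | hadd x y hx hy => simp only [E.hsmul_add, E.add_comp, hx, hy]
    | hom m α hα =>
      have h1 := E.comp_mem hβ hα
      rw [zero_add] at h1
      rw [E.symm_smul hh hα, E.comp_zsmul, E.hrsmul_comp, E.symm_smul hh h1]

/-- A two-sided inverse of a degree-0 morphism has degree 0: its degree-0 component is already a
right inverse. -/
lemma GCat.inv_mem {f : E.Hom A B} {g : E.Hom B A} (hf : f ∈ E.deg A B 0)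
    (hfg : E.comp f g = E.id B) (hgf : E.comp g f = E.id A) : g ∈ E.deg B A 0 := by
  -- Split `g` into its degree-0 part and parts of nonzero degree, and compose with `f`.
  obtain ⟨y, hy⟩ := (E.isInternal B A).2 g
  let F : (DirectSum ℤ fun i => E.deg B A i) →+ (DirectSum ℤ fun i => E.deg B B i) :=
    DirectSum.map fun i => AddMonoidHom.mk'
      (fun x : E.deg B A i => (⟨E.comp f x, by
        simpa using E.comp_mem hf x.2⟩ : E.deg B B i))
      (fun x x' => Subtype.ext (E.add_comp f (x : E.Hom B A) x'))
  have hF : ∀ z, DirectSum.coeAddMonoidHom (E.deg B B) (F z)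
      = E.comp f (DirectSum.coeAddMonoidHom (E.deg B A) z) := by
    intro z
    induction z using DirectSum.induction_on with
    | zero => simp [E.comp_zero]
    | of i x => simp [F, DirectSum.map_of]
    | add x y hx hy => simp only [map_add, hx, hy, E.add_comp]
  have h1 : F y = DirectSum.of (fun i => E.deg B B i) 0 ⟨E.id B, E.id_mem B⟩ := by
    apply (E.isInternal B B).1
    rw [hF, hy, hfg, DirectSum.coeAddMonoidHom_of]
  have h2 : E.comp f (y 0 : E.Hom B A) = E.id B := by
    have h3 := congrArg (fun z => ((z 0 : E.deg B B 0) : E.Hom B B)) h1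
    simpa [F, DirectSum.map_apply, DirectSum.of_eq_same] using h3
  have h4 : g = y 0 := by
    rw [← E.comp_id g, ← h2, ← E.comp_assoc, hgf, E.id_comp]
  rw [h4]
  exact (y 0).2

end GCatLemmas

namespace UnitalProduct

variable {E : GCat H hdeg} (P : UnitalProduct E)

lemma lamInv_mem (A : E.Obj) : P.lamInv A ∈ E.deg A (P.tobj P.unit A) 0 :=
  E.inv_mem (P.lam_mem A) (P.lam_lamInv A) (P.lamInv_lam A)

lemma lamInv_natural {A B : E.Obj} (α : E.Hom A B) :
    E.comp (P.tmap (E.id P.unit) α) (P.lamInv A) = E.comp (P.lamInv B) α := by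
  rw [← E.id_comp (P.tmap (E.id P.unit) α), ← P.lamInv_lam B, E.comp_assoc (P.lamInv B),
    ← P.lam_natural, E.comp_assoc, E.comp_assoc, P.lam_lamInv, E.comp_id]

lemma fam_mem {n : ℤ} {η : E.Hom P.unit P.unit} (hη : η ∈ E.deg P.unit P.unit n) (A : E.Obj) :
    P.fam η A ∈ E.deg A A n := by
  have h := E.comp_mem (P.lam_mem A)
    (E.comp_mem (P.tmap_mem hη (E.id_mem A)) (P.lamInv_mem A))
  simpa [fam] using h

lemma fam_add (η η' : E.Hom P.unit P.unit) (A : E.Obj) :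
    P.fam (η + η') A = P.fam η A + P.fam η' A := by
  simp only [fam, P.tmap_add_left, E.comp_add, E.add_comp]

lemma fam_zero (A : E.Obj) : P.fam 0 A = 0 := by
  simpa using P.fam_add 0 0 A

lemma fam_id (A : E.Obj) : P.fam (E.id P.unit) A = E.id A := by
  rw [fam, P.tmap_id, E.id_comp, P.lam_lamInv]

lemma fam_comp (η η' : E.Hom P.unit P.unit) (A : E.Obj) :
    P.fam (E.comp η η') A = E.comp (P.fam η A) (P.fam η' A) := by
  induction η' using internal_induction (E.isInternal _ _) with
  | h0 => simp only [E.comp_zero, P.fam_zero]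
  | hadd x y hx hy => simp only [E.add_comp, P.fam_add, hx, hy]
  | hom m η' hη' =>
    have h := P.tmap_comp η (E.id A) η' (E.id A) (E.id_mem A) hη'
    rw [gsign_zero_left, one_zsmul, E.id_comp] at h
    simp only [fam]
    rw [← h]
    simp only [E.comp_assoc]
    rw [← E.comp_assoc (P.lamInv A) (P.lam A), P.lamInv_lam, E.id_comp]

lemma fam_hsmul (hH : IsGradedCommRing H hdeg) (h : H) (η : E.Hom P.unit P.unit) (A : E.Obj) :
    P.fam (E.hsmul h η) A = E.hsmul h (P.fam η A) := by
  rw [fam, P.tmap_hsmul, E.comp_hsmul, E.comp_hsmul_of_deg_zero hH (P.lam_mem A), fam]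

/-- The family `(η_A)` lies in the graded center. -/
lemma fam_central {m n : ℤ} {η : E.Hom P.unit P.unit} (hη : η ∈ E.deg P.unit P.unit n)
    {A B : E.Obj} {α : E.Hom A B} (hα : α ∈ E.deg A B m) :
    E.comp α (P.fam η A) = gsign m n • E.comp (P.fam η B) α := by
  have h1 := P.tmap_comp (E.id P.unit) α η (E.id A) hα hη
  have h2 := P.tmap_comp η (E.id B) (E.id P.unit) α (E.id_mem B) (E.id_mem P.unit)
  rw [E.id_comp, E.comp_id] at h1
  rw [gsign_zero_left, one_zsmul, E.id_comp, E.comp_id] at h2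
  simp only [fam]
  rw [← E.comp_assoc, P.lam_natural, E.comp_assoc, ← E.comp_assoc (P.tmap (E.id P.unit) α), h1,
    ← h2, E.zsmul_comp, E.comp_zsmul, E.comp_assoc, P.lamInv_natural]
  simp only [E.comp_assoc]

lemma fam_unit (η : E.Hom P.unit P.unit) : P.fam η P.unit = η := by
  rw [fam, ← E.comp_assoc, P.lam_rho, ← P.rho_natural, E.comp_assoc, ← P.lam_rho, P.lam_lamInv,
    E.comp_id]

end UnitalProduct

end GradedHelpers

/-- Given a unital product `(⊗̄, O, λ, ρ)` on an `H`-graded category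
`E`, the map `η ↦ (λ_A ∘ (η ⊗̄ id_A) ∘ λ_A⁻¹)_A` is a well-defined homomorphism of
graded `H`-algebras `E(O,O) → C_E`, right-inverse to the evaluation `ev_O`; hence
`E(O,O)` is a graded-algebra retract of `C_E` and in particular a
graded-commutative graded `H`-algebra. -/
theorem stmt2 {H : Type*} [Ring H] {hdeg : ℤ → AddSubgroup H}
    (hH : IsGradedCommRing H hdeg) (E : GCat H hdeg) (P : UnitalProduct E) :
    (∀ (n : ℤ) (η : E.Hom P.unit P.unit), η ∈ E.deg P.unit P.unit n →
      ∃ ξ : CenterElem E n, ∀ A : E.Obj, ξ.app A = P.fam η A) ∧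
    (∀ (η η' : E.Hom P.unit P.unit) (A : E.Obj),
      P.fam (η + η') A = P.fam η A + P.fam η' A) ∧
    (∀ (η η' : E.Hom P.unit P.unit) (A : E.Obj),
      P.fam (E.comp η η') A = E.comp (P.fam η A) (P.fam η' A)) ∧
    (∀ A : E.Obj, P.fam (E.id P.unit) A = E.id A) ∧
    (∀ (h : H) (η : E.Hom P.unit P.unit) (A : E.Obj),
      P.fam (E.hsmul h η) A = E.hsmul h (P.fam η A)) ∧
    (∀ η : E.Hom P.unit P.unit, P.fam η P.unit = η) ∧
    (∀ (m n : ℤ) (η η' : E.Hom P.unit P.unit),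
      η ∈ E.deg P.unit P.unit n → η' ∈ E.deg P.unit P.unit m →
      E.comp η η' = gsign m n • E.comp η' η) := by
  refine ⟨fun n η hη => ⟨⟨P.fam η, P.fam_mem hη, fun m α hα => P.fam_central hη hα⟩, fun _ => rfl⟩,
    P.fam_add, P.fam_comp, P.fam_id, P.fam_hsmul hH, P.fam_unit, fun m n η η' hη hη' => ?_⟩
  have h := P.fam_central hη' hη
  rwa [P.fam_unit, gsign_comm] at h
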